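/- Assume p ∤ n (so L/K is tamely ramified). Let r ∈ ℤ and 1 ≤ h ≤ n be such that n divides hr. Set s = hr/n, u = gcd(r,n), and v = gcd(h,s). Then g_h(r) = s if and only if p does not divide the binomial coefficient C(u,v). In particular, if u < v then g_h(r) > s. -/

import Mathlib

/-!
Let `ϖ` be a uniformizer of `L` and `α = c ϖ ^ r` with `c` integral. Since `L / K` is totally
ramified, `1, ϖ, …, ϖ ^ (n - 1)` is a basis of `L` over `K` whose members have valuations distinct
modulo `n`, so the valuation of `∑ xᵢ ϖ ^ i` is the minimum of those of its terms (`term_le_sum`).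

Let `A` be the matrix of multiplication by `α` in this basis and put
`B i j = ϖ ^ (i - j - r) * A i j`, a matrix over `L` conjugate to `ϖ ^ (-r) A`. Then `B` is
integral, its entries with `i ≢ j + r` modulo `n` have positive valuation, and every column of `B`
sums to `c`. Hence `B` reduces modulo the maximal ideal to `c` times the permutation matrix of
`j ↦ j + r` on residues modulo `n`. With `u = gcd (r, n)` and `m = n / u` this permutation has `u`
cycles of length `m`, so its characteristic polynomial is `(X ^ m - 1) ^ u` (`charpoly_shiftMat`).

The condition `n ∣ h r` forces `h = m t`, and `t = gcd (h, s)` (`gcd_data`). Comparing coefficients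
of `X ^ (n - h)` gives `E_h(α) = ± ϖ ^ (h r) * z`, where `z` is integral with residue
`± c ^ h * C(u, t)` (`coeff_residue`). As `ϖ ^ (h r)` has the valuation of an element of `K` of
valuation `s`, always `v_K(E_h(α)) ≥ s`; equality is impossible if `p ∣ C(u, t)`, and it is attained
by `α = ϖ ^ r` otherwise.
-/

open scoped Classical

/-- `Ecoef K L h α` is `E_h(α) = e_h(σ₁(α),…,σₙ(α))`, characterized by the fact that
`(-1)^h * E_h(α)` is the coefficient of `X^(n-h)` in the characteristic polynomial of
multiplication by `α` on `L` as a `K`-vector space. -/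
noncomputable def Ecoef (K L : Type) [Field K] [Field L] [Algebra K L]
    [FiniteDimensional K L] (h : ℕ) (α : L) : K :=
  (-1) ^ h * ((LinearMap.mulLeft K α).charpoly.coeff (Module.finrank K L - h))

open Polynomial WithZero

/-! ### Characteristic polynomials of translations modulo `n` -/

/-- The `h`-th elementary symmetric function of the eigenvalues is homogeneous of degree `h`.
The case `c ≠ 0` comes from substituting `c X` for `X` in `det (X - c M)`. -/
theorem coeff_charpoly_smul {F : Type*} [Field F] {n : ℕ} (M : Matrix (Fin n) (Fin n) F) (c : F)
    {h : ℕ} (h1 : 1 ≤ h) (hn : h ≤ n) :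
    (c • M).charpoly.coeff (n - h) = c ^ h * M.charpoly.coeff (n - h) := by
  by_cases hc : c = 0
  · subst hc
    rw [zero_smul, Matrix.charpoly_zero, coeff_X_pow, Fintype.card_fin, if_neg (by omega),
      zero_pow (by omega), zero_mul]
  have key : ((c • M).charpoly).comp (C c * X) = C (c ^ n) * M.charpoly := by
    have : ((c • M).charpoly).comp (C c * X) = compRingHom (C c * X) (c • M).charpoly := rfl
    rw [this, Matrix.charpoly, RingHom.map_det]
    have h2 : (compRingHom (C c * X)).mapMatrix (c • M).charmatrix = C c • M.charmatrix := by
      ext1 i j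
      by_cases hij : i = j
      · subst hij
        simp [mul_sub]
      · simp [hij]
    rw [h2, Matrix.det_smul, Fintype.card_fin, Matrix.charpoly, C_pow]
  have := congrArg (fun q => q.coeff (n - h)) key
  simp only [comp_C_mul_X_coeff, coeff_C_mul] at this
  have e : c ^ n = c ^ h * c ^ (n - h) := by rw [← pow_add]; congr 1; omega
  rw [e] at this
  have h0 : c ^ (n - h) ≠ 0 := pow_ne_zero _ hc
  apply mul_right_cancel₀ h0
  linear_combination this

/-- The permutation matrix of `j ↦ j + r` on residues modulo `n`, which are represented by
`Fin n`; the entry `(i, j)` is `1` exactly when `i ≡ j + r` modulo `n`. -/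
def shiftMat (R : Type*) [CommRing R] (n : ℕ) (r : ℤ) : Matrix (Fin n) (Fin n) R :=
  Matrix.of fun i j => if (n : ℤ) ∣ (j : ℤ) + r - i then 1 else 0

theorem shiftMat_apply (R : Type*) [CommRing R] (n : ℕ) (r : ℤ) (i j : Fin n) :
    shiftMat R n r i j = if (n : ℤ) ∣ (j : ℤ) + r - i then 1 else 0 := rfl

theorem fin_eq_of_int_dvd {n : ℕ} {i j : Fin n} (h : (n : ℤ) ∣ (i : ℤ) - j) : i = j := by
  have h2 := i.2
  have h3 := j.2
  have := Int.eq_zero_of_abs_lt_dvd h (by rw [abs_lt]; omega)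
  ext; omega

theorem exists_fin_dvd {n : ℕ} (hn : 0 < n) (x : ℤ) : ∃ i : Fin n, (n : ℤ) ∣ x - i := by
  have h0 : (n : ℤ) ≠ 0 := by omega
  have h1 := Int.emod_nonneg x h0
  have h2 := Int.emod_lt_of_pos x (show (0 : ℤ) < n by omega)
  refine ⟨⟨(x % n).toNat, by omega⟩, ?_⟩
  simp only [Int.toNat_of_nonneg h1]
  exact Int.dvd_self_sub_emod

theorem shiftMat_mul (R : Type*) [CommRing R] {n : ℕ} (hn : 0 < n) (a b : ℤ) :
    shiftMat R n a * shiftMat R n b = shiftMat R n (a + b) := by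
  ext i j
  obtain ⟨l, hl⟩ := exists_fin_dvd hn ((j : ℤ) + b)
  rw [Matrix.mul_apply, Finset.sum_eq_single l]
  · simp only [shiftMat, Matrix.of_apply, if_pos hl, mul_one]
    refine if_congr ?_ rfl rfl
    rw [show (j : ℤ) + (a + b) - i = ((j : ℤ) + b - l) + ((l : ℤ) + a - i) by ring]
    exact (Int.dvd_add_right hl).symm
  · intro l' _ hne
    simp only [shiftMat, Matrix.of_apply]
    rw [if_neg (c := (n : ℤ) ∣ (j : ℤ) + b - l'), mul_zero]
    intro h
    apply hne
    apply fin_eq_of_int_dvd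
    have := dvd_sub hl h
    ring_nf at this ⊢
    exact this
  · simp

theorem shiftMat_one_pow (R : Type*) [CommRing R] {n : ℕ} (hn : 0 < n) (k : ℕ) :
    shiftMat R n 1 ^ k = shiftMat R n k := by
  induction k with
  | zero =>
    ext i j
    rw [pow_zero, Matrix.one_apply]
    simp only [shiftMat, Matrix.of_apply]
    refine if_congr ⟨?_, ?_⟩ rfl rfl
    · rintro rfl; simp
    · intro h; exact (fin_eq_of_int_dvd (by simpa using h)).symm
  | succ k ih => rw [pow_succ, ih, shiftMat_mul R hn]; simp

/-- The characteristic polynomial of a full `m`-cycle. The first column of the Cayley–Hamilton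
identity reads off the coefficients, since the powers of the matrix send the first basis vector to
the successive basis vectors. -/
theorem charpoly_shiftMat_one (R : Type*) [CommRing R] {m : ℕ} (hm : 0 < m) :
    (shiftMat R m 1).charpoly = X ^ m - 1 := by
  cases subsingleton_or_nontrivial R
  · exact Subsingleton.elim _ _
  have hdeg : (shiftMat R m 1).charpoly.natDegree = m := by
    rw [Matrix.charpoly_natDegree_eq_dim, Fintype.card_fin]
  have hmon := Matrix.charpoly_monic (shiftMat R m 1)
  have hm1 : (shiftMat R m 1).charpoly.coeff m = 1 := by
    have := hmon.coeff_natDegree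
    rwa [hdeg] at this
  have hlow : ∀ i : Fin m, (shiftMat R m 1).charpoly.coeff i = if (i : ℕ) = 0 then -1 else 0 := by
    intro i
    have hi := i.2
    have hCH := congrFun (congrFun (Matrix.aeval_self_charpoly (shiftMat R m 1)) i) ⟨0, hm⟩
    rw [aeval_eq_sum_range, hdeg, Matrix.sum_apply, Finset.sum_range_succ,
      Finset.sum_eq_single (i : ℕ)] at hCH
    · simp only [shiftMat_one_pow R hm, Matrix.smul_apply, smul_eq_mul, hm1] at hCH
      simp only [shiftMat_apply] at hCH
      rw [if_pos (by simp)] at hCH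
      by_cases h0 : (i : ℕ) = 0
      · rw [if_pos (by simp [h0])] at hCH
        rw [if_pos h0]
        simp at hCH
        linear_combination hCH
      · rw [if_neg] at hCH
        · rw [if_neg h0]; simpa using hCH
        · intro hd
          have h4 := Int.eq_zero_of_abs_lt_dvd
            ((Int.dvd_add_right (dvd_refl (m : ℤ))).1 (by simpa [sub_eq_add_neg] using hd) :
              (m : ℤ) ∣ -(i : ℤ)) (by rw [abs_lt]; omega)
          omega
    · intro k hk hne
      rw [Finset.mem_range] at hk
      simp only [shiftMat_one_pow R hm, Matrix.smul_apply, smul_eq_mul]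
      simp only [shiftMat_apply]
      rw [if_neg, mul_zero]
      intro hd
      have h4 := Int.eq_zero_of_abs_lt_dvd hd (by simp only [abs_lt]; omega)
      simp at h4
      omega
    · intro h; exact absurd (Finset.mem_range.2 hi) h
  ext k
  rw [coeff_sub, coeff_X_pow, coeff_one]
  rcases lt_trichotomy k m with h | h | h
  · rw [hlow ⟨k, h⟩, if_neg h.ne]; split_ifs <;> simp
  · subst h; rw [hm1]; simp [hm.ne']
  · rw [coeff_eq_zero_of_natDegree_lt (by omega), if_neg (by omega), if_neg (by omega), sub_zero]

theorem charpoly_blockDiagonal_const {R : Type*} [CommRing R] {m u : ℕ}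
    (M : Matrix (Fin m) (Fin m) R) :
    (Matrix.blockDiagonal (fun _ : Fin u => M)).charpoly = M.charpoly ^ u := by
  have : (Matrix.blockDiagonal (fun _ : Fin u => M)).charmatrix
      = Matrix.blockDiagonal (fun _ : Fin u => M.charmatrix) := by
    ext1 ⟨i, a⟩ ⟨j, b⟩
    simp only [Matrix.charmatrix_apply, Matrix.blockDiagonal_apply, Matrix.diagonal_apply,
      Prod.mk.injEq]
    by_cases h : a = b <;> simp [h]
  rw [Matrix.charpoly, this, Matrix.det_blockDiagonal]
  simp [Matrix.charpoly]

/-- Here `u = gcd (r, m u)`: translation by `r` on residues modulo `m u` splits into `u` cycles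
of length `m`, the cycle through `a < u` consisting of the classes `a + b r` with `b < m`. -/
theorem charpoly_shiftMat (R : Type*) [CommRing R] {m u : ℕ} (hm : 0 < m) (hu : 0 < u)
    {r r' : ℤ} (hr : r = r' * u) (hco : IsCoprime (m : ℤ) r') :
    (shiftMat R (m * u) r).charpoly = (X ^ m - 1) ^ u := by
  have hn : 0 < m * u := Nat.mul_pos hm hu
  choose f hf using fun x : Fin m × Fin u =>
    exists_fin_dvd hn ((x.2 : ℤ) + (x.1 : ℤ) * r)
  -- `c = 0` gives injectivity of the parametrization `f`, and `c = 1` the matrix entries.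
  have key : ∀ (x y : Fin m × Fin u) (c : ℤ), ((m * u : ℕ) : ℤ) ∣ (f y : ℤ) + c * r - f x ↔
      x.2 = y.2 ∧ (m : ℤ) ∣ (y.1 : ℤ) + c - x.1 := by
    intro x y c
    have e : (f y : ℤ) + c * r - f x = ((x.2 : ℤ) + x.1 * r - f x) - ((y.2 : ℤ) + y.1 * r - f y)
        + (((y.2 : ℤ) - x.2) + ((y.1 : ℤ) + c - x.1) * r) := by ring
    rw [e, Int.dvd_add_right (dvd_sub (hf x) (hf y))]
    have hu0 : (u : ℤ) ≠ 0 := by omega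
    constructor
    · intro h
      have h1 : y.2 = x.2 := by
        apply fin_eq_of_int_dvd
        have h3 : (u : ℤ) ∣ ((y.1 : ℤ) + c - x.1) * r := by
          rw [hr, ← mul_assoc]; exact dvd_mul_left _ _
        refine (Int.dvd_add_left h3).1 (dvd_trans ?_ h)
        push_cast; exact dvd_mul_left _ _
      refine ⟨h1.symm, ?_⟩
      rw [h1, sub_self, zero_add, hr, ← mul_assoc] at h
      push_cast at h
      exact hco.dvd_of_dvd_mul_right (Int.dvd_of_mul_dvd_mul_right hu0 h)
    · rintro ⟨h1, d, hd⟩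
      rw [h1, hd, hr, sub_self, zero_add]
      exact ⟨d * r', by push_cast; ring⟩
  have hinj : Function.Injective f := by
    intro x y hxy
    have := (key x y 0).1 (by rw [hxy]; simp)
    refine Prod.ext (fin_eq_of_int_dvd ?_).symm this.1
    simpa using this.2
  have hbij : Function.Bijective f :=
    (Fintype.bijective_iff_injective_and_card f).2 ⟨hinj, by simp⟩
  have hre : Matrix.reindex (Equiv.ofBijective f hbij) (Equiv.ofBijective f hbij)
      (Matrix.blockDiagonal (fun _ : Fin u => shiftMat R m 1)) = shiftMat R (m * u) r := by
    rw [← Equiv.eq_symm_apply]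
    ext x y
    simp only [Matrix.reindex_symm, Matrix.reindex_apply, Matrix.submatrix_apply,
      Equiv.symm_symm, Equiv.ofBijective_apply, Matrix.blockDiagonal_apply, shiftMat,
      Matrix.of_apply]
    have := key x y 1
    rw [one_mul] at this
    rw [if_congr this rfl rfl, ite_and]
  rw [← hre, Matrix.charpoly_reindex, charpoly_blockDiagonal_const, charpoly_shiftMat_one R hm]

theorem coeff_X_pow_sub_one_pow (R : Type*) [CommRing R] {m u t : ℕ} (hm : 0 < m) (ht : t ≤ u) :
    ((X ^ m - 1 : R[X]) ^ u).coeff (m * u - m * t) = (-1) ^ t * (u.choose t : R) := by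
  have e : (X ^ m - 1 : R[X]) ^ u = expand R m ((X - 1) ^ u) := by simp
  rw [e, ← Nat.mul_sub, mul_comm m, coeff_expand_mul hm]
  have := coeff_X_add_C_pow (-1 : R) u (u - t)
  rw [C_neg, C_1, ← sub_eq_add_neg] at this
  rw [this, Nat.sub_sub_self ht, Nat.choose_symm ht]

/-! ### Reduction of the matrix of multiplication by `α` -/

/-- The nonzero terms `xᵢ ϖⁱ`, `0 ≤ i < n`, have pairwise distinct valuations (they differ modulo
`n`), so the valuation of their sum is that of the dominant term. -/
theorem term_le_sum {K L : Type*} [Field K] [Field L] [Algebra K L] {n : ℕ}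
    (w : Valuation L ℤᵐ⁰) {ϖ : L} (hϖ : w ϖ = exp (-1))
    (hK : ∀ x : K, x ≠ 0 → ∃ a : ℤ, w (algebraMap K L x) = exp (n * a))
    (x : Fin n → K) (j : Fin n) :
    w (algebraMap K L (x j) * ϖ ^ (j : ℕ)) ≤ w (∑ i, algebraMap K L (x i) * ϖ ^ (i : ℕ)) := by
  set T : Fin n → L := fun i => algebraMap K L (x i) * ϖ ^ (i : ℕ) with hT
  obtain ⟨j₀, -, hmax⟩ :=
    Finset.exists_max_image Finset.univ (fun i => w (T i)) ⟨j, Finset.mem_univ j⟩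
  refine (hmax j (Finset.mem_univ j)).trans ?_
  by_cases h0 : w (T j₀) = 0
  · rw [h0]; exact zero_le
  have hval : ∀ i, w (T i) ≠ 0 → ∃ a : ℤ, w (T i) = exp (n * a - (i : ℤ)) := by
    intro i hi
    have hx : x i ≠ 0 := by
      intro hx; apply hi; simp [hT, hx]
    obtain ⟨a, ha⟩ := hK _ hx
    refine ⟨a, ?_⟩
    simp only [hT, map_mul, map_pow, ha, hϖ]
    rw [← exp_nsmul, ← exp_add]
    congr 1; simp [sub_eq_add_neg]
  have hlt : ∀ i ∈ Finset.univ.erase j₀, w (T i) < w (T j₀) := by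
    intro i hi
    refine lt_of_le_of_ne (hmax i (Finset.mem_univ i)) fun heq => (Finset.ne_of_mem_erase hi) ?_
    obtain ⟨a, ha⟩ := hval i (by rw [heq]; exact h0)
    obtain ⟨b, hb⟩ := hval j₀ h0
    rw [ha, hb, exp_inj] at heq
    apply fin_eq_of_int_dvd
    exact ⟨a - b, by linear_combination -heq⟩
  change w (T j₀) ≤ w (∑ i, T i)
  rw [← Finset.add_sum_erase _ _ (Finset.mem_univ j₀),
    Valuation.map_add_eq_of_lt_left _ (Valuation.map_sum_lt _ h0 hlt)]

theorem residue_eq_zero_iff_lt {L : Type*} [Field L] (w : Valuation L ℤᵐ⁰)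
    (z : w.valuationSubring) : IsLocalRing.residue w.valuationSubring z = 0 ↔ w z < 1 := by
  have hunit : IsUnit z ↔ w z = 1 :=
    (Valuation.integer.integers w).isUnit_iff_valuation_eq_one (x := z)
  rw [IsLocalRing.residue_eq_zero_iff, IsLocalRing.mem_maximalIdeal, mem_nonunits_iff, hunit]
  exact ⟨fun h => lt_of_le_of_ne z.2 h, fun h => h.ne⟩

/-- With `n = m u`, `h = m t` and `α = c ϖ ^ r`, the coefficient of `X ^ (n - h)` in the
characteristic polynomial of `α` is `ϖ ^ (h r) * z`, where `z` is integral with residue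
`c ^ h * (-1) ^ t * C(u, t)`. -/
theorem coeff_residue {K L : Type*} [Field K] [Field L] [Algebra K L] [FiniteDimensional K L]
    {m u t : ℕ} (hm : 0 < m) (hu : 0 < u) (ht1 : 1 ≤ t) (ht : t ≤ u)
    (hrank : Module.finrank K L = m * u)
    {r r' : ℤ} (hr : r = r' * u) (hco : IsCoprime (m : ℤ) r')
    (w : Valuation L ℤᵐ⁰) {ϖ : L} (hϖ : w ϖ = exp (-1))
    (hK : ∀ x : K, x ≠ 0 → ∃ a : ℤ, w (algebraMap K L x) = exp (((m * u : ℕ) : ℤ) * a))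
    (α : L) (c : w.valuationSubring) (hc : (c : L) = α * ϖ ^ (-r)) :
    ∃ z : w.valuationSubring,
      algebraMap K L ((LinearMap.mulLeft K α).charpoly.coeff (m * u - m * t))
        = (ϖ ^ r) ^ (m * t) * z ∧
      IsLocalRing.residue _ z
        = IsLocalRing.residue _ c ^ (m * t) * ((-1) ^ t * (u.choose t : ℕ)) := by
  have hϖ0 : ϖ ≠ 0 := by
    intro h; rw [h, map_zero] at hϖ; exact exp_ne_zero hϖ.symm
  have hϖz : ∀ a : ℤ, w (ϖ ^ a) = exp (-a) := by
    intro a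
    rw [map_zpow₀, hϖ, ← exp_zsmul]; simp
  have hli : LinearIndependent K (fun i : Fin (m * u) => ϖ ^ (i : ℕ)) := by
    rw [Fintype.linearIndependent_iff]
    intro g hg j
    have := term_le_sum w hϖ hK g j
    simp only [Algebra.smul_def] at hg
    rw [hg, map_zero, le_zero_iff, map_eq_zero, mul_eq_zero] at this
    rcases this with h | h
    · simpa using h
    · exact absurd h (pow_ne_zero _ hϖ0)
  have hmu : 0 < m * u := Nat.mul_pos hm hu
  have : NeZero (m * u) := ⟨hmu.ne'⟩
  let b := basisOfLinearIndependentOfCardEqFinrank hli (by rw [hrank]; simp)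
  have hb : ∀ i, b i = ϖ ^ (i : ℕ) := fun i => by
    simp [b]
  set A := LinearMap.toMatrix b b (LinearMap.mulLeft K α) with hA
  have hAsum : ∀ j, ∑ i, algebraMap K L (A i j) * ϖ ^ (i : ℕ) = α * ϖ ^ (j : ℕ) := by
    intro j
    have := b.sum_repr (α * ϖ ^ (j : ℕ))
    rw [← this]
    refine Finset.sum_congr rfl fun i _ => ?_
    rw [hA, LinearMap.toMatrix_apply, Algebra.smul_def, hb, hb, LinearMap.mulLeft_apply]
  -- `B` is `ϖ ^ (-r)` times the conjugate of `A` by `diag (ϖ ^ i)`. It is integral, each of its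
  -- columns sums to `c`, and the entries with `i ≢ j + r` modulo `n` lie in the maximal ideal.
  let B : Matrix (Fin (m * u)) (Fin (m * u)) L :=
    Matrix.of fun i j => algebraMap K L (A i j) * ϖ ^ ((i : ℤ) - j - r)
  have hBeq : ∀ i j, B i j = (algebraMap K L (A i j) * ϖ ^ (i : ℕ)) * ϖ ^ (-(j : ℤ) - r) := by
    intro i j
    simp only [B, Matrix.of_apply]
    rw [mul_assoc, ← zpow_natCast, ← zpow_add₀ hϖ0]
    congr 2; ring
  have hcol : ∀ j : Fin (m * u), α * ϖ ^ (j : ℕ) * ϖ ^ (-(j : ℤ) - r) = c := by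
    intro j
    rw [hc, mul_assoc, ← zpow_natCast, ← zpow_add₀ hϖ0]
    congr 2; ring
  have hBsum : ∀ j, ∑ i, B i j = c := by
    intro j
    simp only [hBeq, ← Finset.sum_mul, hAsum, hcol]
  have hBint : ∀ i j, w (B i j) ≤ 1 := by
    intro i j
    have h1 := term_le_sum w hϖ hK (fun i => A i j) i
    rw [hAsum] at h1
    rw [hBeq, map_mul]
    refine (mul_le_mul_left h1 _).trans ?_
    rw [← map_mul, hcol]
    exact c.2
  have hBoff : ∀ i j : Fin (m * u), ¬ (((m * u : ℕ) : ℤ) ∣ (j : ℤ) + r - i) → w (B i j) < 1 := by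
    intro i j hij
    refine lt_of_le_of_ne (hBint i j) fun h1 => hij ?_
    simp only [B, Matrix.of_apply] at h1
    have hA0 : A i j ≠ 0 := by
      intro h; rw [h] at h1; simp at h1
    obtain ⟨a, ha⟩ := hK _ hA0
    rw [map_mul, ha, hϖz, ← exp_add, ← exp_zero, exp_inj] at h1
    exact ⟨-a, by linear_combination h1⟩
  let B' : Matrix (Fin (m * u)) (Fin (m * u)) w.valuationSubring :=
    Matrix.of fun i j => ⟨B i j, hBint i j⟩
  have hB' : B'.map (w.valuationSubring.subtype) = B := by
    ext i j; rfl
  have hB'sum : ∀ j, ∑ i, B' i j = c := by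
    intro j
    apply Subtype.ext
    have := hBsum j
    rw [← this]
    exact map_sum w.valuationSubring.subtype _ _
  have hBres : B'.map (IsLocalRing.residue w.valuationSubring)
      = IsLocalRing.residue _ c • shiftMat _ (m * u) r := by
    have hoff : ∀ i j : Fin (m * u), ¬ (((m * u : ℕ) : ℤ) ∣ (j : ℤ) + r - i) →
        IsLocalRing.residue w.valuationSubring (B' i j) = 0 := by
      intro i j hij
      exact (residue_eq_zero_iff_lt w _).2 (hBoff i j hij)
    ext i j
    rw [Matrix.map_apply, Matrix.smul_apply, shiftMat_apply]
    split_ifs with hij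
    · rw [← hB'sum j, map_sum, Finset.sum_eq_single i]
      · simp
      · intro i' _ hne
        apply hoff
        intro h
        apply hne
        apply fin_eq_of_int_dvd
        have := dvd_sub hij h
        ring_nf at this ⊢
        exact this
      · simp
    · rw [hoff i j hij]; simp
  have h1 : 1 ≤ m * t := Nat.mul_pos hm ht1
  have h2 : m * t ≤ m * u := Nat.mul_le_mul_left _ ht
  refine ⟨B'.charpoly.coeff (m * u - m * t), ?_, ?_⟩
  · have hconj : A.map (algebraMap K L) = (Matrix.diagonal (fun i : Fin (m * u) => ϖ ^ (-(i : ℤ)))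
        * (ϖ ^ r • B)) * Matrix.diagonal (fun i : Fin (m * u) => ϖ ^ (i : ℤ)) := by
      ext i j
      rw [Matrix.mul_diagonal, Matrix.diagonal_mul, Matrix.map_apply, Matrix.smul_apply]
      simp only [B, Matrix.of_apply, smul_eq_mul]
      have : ϖ ^ (-(i : ℤ)) * ϖ ^ r * ϖ ^ ((i : ℤ) - j - r) * ϖ ^ (j : ℤ) = 1 := by
        rw [← zpow_add₀ hϖ0, ← zpow_add₀ hϖ0, ← zpow_add₀ hϖ0, ← zpow_zero ϖ]
        congr 1; ring
      linear_combination -(algebraMap K L (A i j)) * this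
    have hD : Matrix.diagonal (fun i : Fin (m * u) => ϖ ^ (i : ℤ))
        * Matrix.diagonal (fun i : Fin (m * u) => ϖ ^ (-(i : ℤ))) = 1 := by
      rw [Matrix.diagonal_mul_diagonal, ← Matrix.diagonal_one]
      congr 1
      funext i
      rw [← zpow_add₀ hϖ0, add_neg_cancel, zpow_zero]
    rw [← LinearMap.charpoly_toMatrix _ b, ← hA, ← coeff_map, ← Matrix.charpoly_map, hconj,
      Matrix.charpoly_mul_comm, ← mul_assoc, hD, one_mul, coeff_charpoly_smul _ _ h1 h2, ← hB',
      Matrix.charpoly_map, coeff_map]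
    rfl
  · rw [← coeff_map, ← Matrix.charpoly_map, hBres, coeff_charpoly_smul _ _ h1 h2,
      charpoly_shiftMat _ hm hu hr hco, coeff_X_pow_sub_one_pow _ hm ht]

/-! ### The valuation and the numerical parameters -/

/-- The multiplicative valuation `x ↦ exp (-vL x)` attached to an additively written discrete
valuation `vL`, whose value at `0` is ignored. -/
noncomputable def valOf {L : Type*} [Field L] (vL : L → ℤ)
    (hmul : ∀ x y : L, x ≠ 0 → y ≠ 0 → vL (x * y) = vL x + vL y)
    (hadd : ∀ x y : L, x ≠ 0 → y ≠ 0 → x + y ≠ 0 → min (vL x) (vL y) ≤ vL (x + y)) :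
    Valuation L ℤᵐ⁰ where
  toFun x := if x = 0 then 0 else exp (-(vL x))
  map_zero' := by simp
  map_one' := by
    have := hmul 1 1 one_ne_zero one_ne_zero
    rw [mul_one] at this
    rw [if_neg one_ne_zero, ← exp_zero, exp_inj]; omega
  map_mul' x y := by
    by_cases hx : x = 0
    · simp [hx]
    by_cases hy : y = 0
    · simp [hy]
    rw [if_neg hx, if_neg hy, if_neg (mul_ne_zero hx hy), hmul x y hx hy, ← exp_add]
    congr 1; ring
  map_add_le_max' x y := by
    by_cases hx : x = 0
    · simp [hx]
    by_cases hy : y = 0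
    · simp [hy]
    by_cases hxy : x + y = 0
    · simp [hxy]
    have := hadd x y hx hy hxy
    rw [if_neg hx, if_neg hy, if_neg hxy, le_max_iff, exp_le_exp, exp_le_exp]
    omega

theorem valOf_apply {L : Type*} [Field L] (vL : L → ℤ)
    (hmul : ∀ x y : L, x ≠ 0 → y ≠ 0 → vL (x * y) = vL x + vL y)
    (hadd : ∀ x y : L, x ≠ 0 → y ≠ 0 → x + y ≠ 0 → min (vL x) (vL y) ≤ vL (x + y))
    {x : L} (hx : x ≠ 0) : valOf vL hmul hadd x = exp (-(vL x)) := if_neg hx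

/-- Arithmetic of the parameters: writing `n = m u` and `r = r' u` with `u = gcd (r, n)`, the
condition `n ∣ h r` forces `h = m t`, and then `gcd (h, h r / n) = t`. In particular `v = t ≤ u`. -/
theorem gcd_data {n : ℕ} (hn : 0 < n) {r : ℤ} {h : ℕ} (h1 : 1 ≤ h) (h2 : h ≤ n)
    (hdvd : (n : ℤ) ∣ (h : ℤ) * r) :
    ∃ (m u t : ℕ) (r' : ℤ), 0 < m ∧ 0 < u ∧ 1 ≤ t ∧ t ≤ u ∧ n = m * u ∧ h = m * t ∧
      r = r' * u ∧ IsCoprime (m : ℤ) r' ∧ Int.gcd r n = u ∧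
      Int.gcd (h : ℤ) ((h : ℤ) * r / n) = t := by
  have hu : 0 < Int.gcd r n := Int.gcd_pos_of_ne_zero_right _ (by omega)
  obtain ⟨r', n', hco, hr, hn'⟩ := Int.exists_gcd_one hu
  set u := Int.gcd r n with hudef
  have hn'0 : 0 < n' := by
    by_contra hneg
    have : n' * (u : ℤ) ≤ 0 := mul_nonpos_of_nonpos_of_nonneg (by omega) (by omega)
    omega
  lift n' to ℕ using hn'0.le with m
  have hm : 0 < m := by omega
  have hnm : n = m * u := by exact_mod_cast hn'
  have hco' : IsCoprime (m : ℤ) r' := (Int.isCoprime_iff_gcd_eq_one.2 hco).symm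
  have hmh : (m : ℤ) ∣ h := by
    refine hco'.dvd_of_dvd_mul_right ?_
    rw [hn', hr, ← mul_assoc] at hdvd
    exact Int.dvd_of_mul_dvd_mul_right (by omega) hdvd
  obtain ⟨t, ht⟩ : m ∣ h := by exact_mod_cast hmh
  have htpos : 1 ≤ t := by
    rcases Nat.eq_zero_or_pos t with h0 | h0
    · rw [h0] at ht; omega
    · exact h0
  have htu : t ≤ u := by
    rw [ht, hnm] at h2
    exact Nat.le_of_mul_le_mul_left h2 hm
  refine ⟨m, u, t, r', hm, hu, htpos, htu, hnm, ht, hr, hco', rfl, ?_⟩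
  have hs : (h : ℤ) * r / n = t * r' := by
    apply Int.ediv_eq_of_eq_mul_left (by omega)
    rw [hn', ht, hr]; push_cast; ring
  rw [hs, ht]
  push_cast
  rw [mul_comm (m : ℤ), Int.gcd_mul_left, Int.isCoprime_iff_gcd_eq_one.1 hco']
  simp

theorem stmt16
    (p : ℕ) (hp : p.Prime)
    (K L : Type) [Field K] [Field L] [Algebra K L] [FiniteDimensional K L]
    [Algebra.IsSeparable K L]
    (n : ℕ) (hn : 0 < n) (hrank : Module.finrank K L = n)
    (vK : K → ℤ) (vL : L → ℤ)
    (hvKmul : ∀ x y : K, x ≠ 0 → y ≠ 0 → vK (x * y) = vK x + vK y)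
    (hvKadd : ∀ x y : K, x ≠ 0 → y ≠ 0 → x + y ≠ 0 → min (vK x) (vK y) ≤ vK (x + y))
    (hvKsurj : ∀ m : ℤ, ∃ x : K, x ≠ 0 ∧ vK x = m)
    (hvLmul : ∀ x y : L, x ≠ 0 → y ≠ 0 → vL (x * y) = vL x + vL y)
    (hvLadd : ∀ x y : L, x ≠ 0 → y ≠ 0 → x + y ≠ 0 → min (vL x) (vL y) ≤ vL (x + y))
    (hvLsurj : ∀ m : ℤ, ∃ x : L, x ≠ 0 ∧ vL x = m)
    (hext : ∀ x : K, x ≠ 0 → vL (algebraMap K L x) = (n : ℤ) * vK x)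
    (hcomplete : ∀ s : ℕ → K,
      (∀ m : ℤ, ∃ N : ℕ, ∀ i, N ≤ i → ∀ j, N ≤ j → s i - s j = 0 ∨ m ≤ vK (s i - s j)) →
      ∃ x : K, ∀ m : ℤ, ∃ N : ℕ, ∀ i, N ≤ i → s i - x = 0 ∨ m ≤ vK (s i - x))
    (hreschar : (p : K) = 0 ∨ 1 ≤ vK (p : K))
    (hresperf : ∀ x : K, (x = 0 ∨ 0 ≤ vK x) →
      ∃ y : K, (y = 0 ∨ 0 ≤ vK y) ∧ (x - y ^ p = 0 ∨ 1 ≤ vK (x - y ^ p)))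
    (hpn : ¬ p ∣ n)
    (r : ℤ) (h : ℕ) (h1 : 1 ≤ h) (h2 : h ≤ n) (hdvd : (n : ℤ) ∣ (h : ℤ) * r) :
    -- with `s = hr/n`, `u = gcd(r,n)`, `v = gcd(h,s)`:
    -- `g_h(r) = s` iff `p ∤ C(u,v)`, and if `u < v` then `g_h(r) > s`
    (((∀ α : L, (α = 0 ∨ r ≤ vL α) →
          (Ecoef K L h α = 0 ∨ (h : ℤ) * r / (n : ℤ) ≤ vK (Ecoef K L h α))) ∧
        ∃ α : L, (α = 0 ∨ r ≤ vL α) ∧ Ecoef K L h α ≠ 0 ∧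
          vK (Ecoef K L h α) = (h : ℤ) * r / (n : ℤ)) ↔
      ¬ p ∣ Nat.choose (Int.gcd r (n : ℤ)) (Int.gcd (h : ℤ) ((h : ℤ) * r / (n : ℤ)))) ∧
    (Int.gcd r (n : ℤ) < Int.gcd (h : ℤ) ((h : ℤ) * r / (n : ℤ)) →
      ∀ α : L, (α = 0 ∨ r ≤ vL α) →
        (Ecoef K L h α = 0 ∨ (h : ℤ) * r / (n : ℤ) + 1 ≤ vK (Ecoef K L h α))) := by
  obtain ⟨m, u, t, r', hm, hu, ht1, ht, hnm, hht, hr, hco, hgu, hgt⟩ := gcd_data hn h1 h2 hdvd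
  rw [hgu, hgt]
  -- The second claim is vacuous, since `gcd (h, s) = t ≤ u` always holds.
  refine ⟨?_, fun hlt => absurd ht (by omega)⟩
  have hs : (n : ℤ) * ((h : ℤ) * r / n) = h * r := Int.mul_ediv_cancel' hdvd
  set s := (h : ℤ) * r / n with hsdef
  have hn0 : (0 : ℤ) < n := by omega
  let w := valOf vL hvLmul hvLadd
  have hw : ∀ {x : L}, x ≠ 0 → w x = exp (-(vL x)) := fun hx => valOf_apply vL hvLmul hvLadd hx
  obtain ⟨ϖ, hϖ0, hϖ1⟩ := hvLsurj 1
  have hϖ : w ϖ = exp (-1) := by rw [hw hϖ0, hϖ1]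
  have hϖz : ∀ a : ℤ, w (ϖ ^ a) = exp (-a) := by
    intro a
    rw [map_zpow₀, hϖ, ← exp_zsmul]; simp
  have hwK : ∀ x : K, x ≠ 0 → w (algebraMap K L x) = exp ((n : ℤ) * -(vK x)) := by
    intro x hx
    rw [hw (by simpa using hx), hext x hx]; congr 1; ring
  have hle : ∀ (x : L) (a : ℤ), (x = 0 ∨ a ≤ vL x) → w x ≤ exp (-a) := by
    rintro x a (hx | hx)
    · simp [hx]
    · by_cases h0 : x = 0
      · simp [h0]
      · rw [hw h0, exp_le_exp]; omega
  -- `E_h(α)` is `± ϖ ^ (h r) * z` with `z` integral of known residue.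
  have main : ∀ (α : L) (c : w.valuationSubring), (c : L) = α * ϖ ^ (-r) →
      ∃ z : w.valuationSubring, w (algebraMap K L (Ecoef K L h α)) = exp (n * -s) * w z ∧
        IsLocalRing.residue _ z
          = IsLocalRing.residue _ c ^ h * ((-1) ^ t * (u.choose t : ℕ)) := by
    intro α c hc
    obtain ⟨z, hz1, hz2⟩ := coeff_residue (K := K) hm hu ht1 ht (hrank.trans hnm) hr hco w hϖ
      (fun x hx => ⟨_, by rw [← hnm]; exact hwK x hx⟩) α c hc
    rw [← hnm, ← hht] at hz1
    rw [← hht] at hz2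
    refine ⟨z, ?_, hz2⟩
    rw [Ecoef, hrank, map_mul, map_mul, hz1, map_mul, map_pow w, hϖz, ← exp_nsmul]
    have hsign : w (algebraMap K L ((-1) ^ h)) = 1 := by simp
    rw [hsign, one_mul]
    congr 2
    rw [nsmul_eq_mul]
    linear_combination hs
  have hcint : ∀ α : L, (α = 0 ∨ r ≤ vL α) → w (α * ϖ ^ (-r)) ≤ 1 := by
    intro α hα
    rw [map_mul, hϖz]
    refine (mul_le_mul_left (hle α r hα) _).trans ?_
    rw [← exp_add]; simp
  have hresp : (p : IsLocalRing.ResidueField w.valuationSubring) = 0 := by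
    rw [← map_natCast (IsLocalRing.residue w.valuationSubring), residue_eq_zero_iff_lt]
    have e : ((p : w.valuationSubring) : L) = algebraMap K L (p : K) := by simp
    rw [e]
    by_cases hp0 : (p : K) = 0
    · rw [hp0]; simp
    · have h1 := hreschar.resolve_left hp0
      rw [hwK _ hp0, ← exp_zero, exp_lt_exp]
      nlinarith
  constructor
  · rintro ⟨-, α, hα, hE, hEv⟩ hdiv
    obtain ⟨z, hz1, hz2⟩ := main α ⟨_, hcint α hα⟩ rfl
    obtain ⟨q, hq⟩ := hdiv
    rw [hq, Nat.cast_mul, hresp, zero_mul, mul_zero, mul_zero, residue_eq_zero_iff_lt] at hz2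
    rw [hwK _ hE, hEv] at hz1
    have : exp ((n : ℤ) * -s) * w z < exp ((n : ℤ) * -s) * 1 :=
      mul_lt_mul_of_pos_left hz2 exp_pos
    rw [← hz1, mul_one] at this
    exact lt_irrefl _ this
  · intro hndiv
    refine ⟨fun α hα => ?_, ϖ ^ r, Or.inr ?_, ?_⟩
    · obtain ⟨z, hz1, -⟩ := main α ⟨_, hcint α hα⟩ rfl
      refine or_iff_not_imp_left.2 fun hE => ?_
      have : exp ((n : ℤ) * -s) * w z ≤ exp ((n : ℤ) * -s) * 1 := mul_le_mul_right z.2 _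
      rw [← hz1, hwK _ hE, mul_one, exp_le_exp] at this
      have := le_of_mul_le_mul_left this hn0
      omega
    · have := hϖz r
      rw [hw (zpow_ne_zero _ hϖ0), exp_inj] at this
      omega
    · obtain ⟨z, hz1, hz2⟩ := main (ϖ ^ r) 1 (by
        rw [← zpow_add₀ hϖ0, add_neg_cancel, zpow_zero]; rfl)
      have hne : ((u.choose t : ℕ) : IsLocalRing.ResidueField w.valuationSubring) ≠ 0 := by
        intro h0
        have hcop : IsCoprime (p : ℤ) (u.choose t : ℤ) :=
          Nat.isCoprime_iff_coprime.2 ((Nat.Prime.coprime_iff_not_dvd hp).2 hndiv)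
        obtain ⟨a, b, hab⟩ := hcop
        have := congrArg (Int.cast : ℤ → IsLocalRing.ResidueField w.valuationSubring) hab
        push_cast at this
        rw [hresp, h0] at this
        simp at this
      have hz : IsLocalRing.residue w.valuationSubring z ≠ 0 := by
        rw [hz2, map_one, one_pow, one_mul]
        exact mul_ne_zero (pow_ne_zero _ (by simp)) hne
      rw [Ne, residue_eq_zero_iff_lt, not_lt] at hz
      have hwz : w z = 1 := le_antisymm z.2 hz
      rw [hwz, mul_one] at hz1
      have hE : Ecoef K L h (ϖ ^ r) ≠ 0 := by
        intro h0
        rw [h0, map_zero, map_zero] at hz1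
        exact exp_ne_zero hz1.symm
      refine ⟨hE, ?_⟩
      rw [hwK _ hE, exp_inj] at hz1
      have := mul_left_cancel₀ hn0.ne' hz1
      omega
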